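/- Let μ be a shift-invariant measure on Σ₂ whose support is uniquely ergodic. Then there exists an open set U of pairs of bounded invertible weighted shift operators with positive coefficients such that every pair in U has μ as its unique maximising measure. -/

import Mathlib

open MeasureTheory Filter

noncomputable section

/-- The full two-sided shift space on two symbols. -/
abbrev Sig := ℤ → Bool

/-- The two-sided shift map. -/
def shift : Sig → Sig := fun x i => x (i + 1)

variable {H : Type*} [NormedAddCommGroup H] [InnerProductSpace ℝ H] [CompleteSpace H]

/-- The set of pairs of bounded invertible weighted shift operators with positive
coefficients relative to the orthonormal basis `e` (topologized as a subset of `B(H)²`).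
Invertibility corresponds to the coefficient sequences being bounded away from zero. -/
def WSet (e : HilbertBasis ℤ ℝ H) : Set ((H →L[ℝ] H) × (H →L[ℝ] H)) :=
  {p | ∃ α β : ℤ → ℝ,
    (∃ c : ℝ, 0 < c ∧ ∀ i : ℤ, c ≤ α i) ∧ (∃ c : ℝ, 0 < c ∧ ∀ i : ℤ, c ≤ β i) ∧
    (∀ i : ℤ, p.1 (e i) = α i • e (i + 1)) ∧ (∀ i : ℤ, p.2 (e i) = β i • e (i + 1))}

/-- The product `L_{x_{n-1}} ∘ ⋯ ∘ L_{x_0}` of members of the pair `p = (L₀, L₁)` chosen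
according to the symbols of `x`. -/
def opProd (p : (H →L[ℝ] H) × (H →L[ℝ] H)) (x : Sig) (n : ℕ) : H →L[ℝ] H :=
  (List.ofFn fun i : Fin n => if x (i : ℤ) then p.2 else p.1).reverse.prod

/-- The top Lyapunov exponent of the pair `p` with respect to the shift-invariant
measure `μ`: `Λ(p,μ) = inf_{n ≥ 1} (1/n) ∫ log ‖L_{x_{n-1}} ⋯ L_{x_0}‖ dμ(x)`. -/
def LamOp (p : (H →L[ℝ] H) × (H →L[ℝ] H)) (μ : Measure Sig) : ℝ :=
  ⨅ n : ℕ, ((n : ℝ) + 1)⁻¹ * ∫ x, Real.log ‖opProd p x (n + 1)‖ ∂μ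

/-- The logarithm of the joint spectral radius of the pair `p`:
`log ϱ(p) = inf_{n ≥ 1} (1/n) sup_x log ‖L_{x_{n-1}} ⋯ L_{x_0}‖`. -/
def logSprOp (p : (H →L[ℝ] H) × (H →L[ℝ] H)) : ℝ :=
  ⨅ n : ℕ, ((n : ℝ) + 1)⁻¹ * ⨆ x : Sig, Real.log ‖opProd p x (n + 1)‖

/-- The (topological) support of a Borel measure on `Σ₂`. -/
def suppM (μ : Measure Sig) : Set Sig :=
  {x : Sig | ∀ U : Set Sig, IsOpen U → x ∈ U → 0 < μ U}

/-!
The norm of a product along `x` is the supremum over the sites `i` of the product of the weights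
met when the word `x 0 ⋯ x (n - 1)` is read from `i` onwards, so a pair of shifts can prescribe
site by site which words are favoured. Mark a sparse sequence of longer and longer blocks of sites
by words of `K = supp μ`, so that every word of `K` occurs, and give weight `8` to the marked
symbols and weight `1` to everything else. All pairs within distance `1` keep the resulting gap.

The gaps between the blocks are so long that a reading window either is unmarked half of the time,
and then stays below average, or sees only one block, and then reads a word of `K` up to
mismatches that each cost a fixed amount. Along words of `K` the weights are controlled by
Oxtoby's theorem, which gives uniform convergence of Birkhoff averages on `K` and hence `log ϱ =
Λ(φ, μ)`. An invariant measure other than `μ` charges a pattern forbidden in `K`; its orbits meet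
this pattern with positive frequency, and the mismatches forced by these visits push the exponent
strictly below.
-/

section Birkhoff

variable {X : Type*} {T : X → X} {g : X → ℝ}

lemma abs_birkhoffSum_le {B : ℝ} (hB : ∀ x, |g x| ≤ B) (n : ℕ) (x : X) :
    |birkhoffSum T g n x| ≤ n * B := by
  refine (Finset.abs_sum_le_sum_abs _ _).trans
    ((Finset.sum_le_sum fun k _ => hB (T^[k] x)).trans_eq ?_)
  simp

lemma birkhoffSum_birkhoffSum_comm (m n : ℕ) (x : X) :
    birkhoffSum T (birkhoffSum T g m) n x = birkhoffSum T (birkhoffSum T g n) m x := by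
  simp only [birkhoffSum, ← Function.iterate_add_apply]
  rw [Finset.sum_comm]
  simp only [add_comm]

lemma abs_birkhoffSum_iterate_sub_le {B : ℝ} (hB : ∀ x, |g x| ≤ B) (n j : ℕ) (x : X) :
    |birkhoffSum T g n (T^[j] x) - birkhoffSum T g n x| ≤ 2 * j * B := by
  have hadd : birkhoffSum T g n (T^[j] x) - birkhoffSum T g n x =
      birkhoffSum T g j (T^[n] x) - birkhoffSum T g j x := by
    linarith [birkhoffSum_add T g n j x, birkhoffSum_add T g j n x,
      congrArg (birkhoffSum T g · x) (add_comm n j)]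
  have hn := abs_le.1 (abs_birkhoffSum_le (T := T) hB j (T^[n] x))
  have h0 := abs_le.1 (abs_birkhoffSum_le (T := T) hB j x)
  rw [hadd, abs_le]
  constructor <;> linarith

/- Summing all windows of length `m` counts every term `m` times, up to the two ends. -/
lemma abs_birkhoffSum_birkhoffSum_sub_le {B : ℝ} (hB : ∀ x, |g x| ≤ B) (m n : ℕ) (x : X) :
    |birkhoffSum T (birkhoffSum T g m) n x - m * birkhoffSum T g n x| ≤ 2 * m ^ 2 * B := by
  have hB0 : 0 ≤ B := (abs_nonneg _).trans (hB x)
  have hsum : birkhoffSum T (birkhoffSum T g m) n x - m * birkhoffSum T g n x =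
      ∑ j ∈ Finset.range m, (birkhoffSum T g n (T^[j] x) - birkhoffSum T g n x) := by
    rw [birkhoffSum_birkhoffSum_comm, Finset.sum_sub_distrib, Finset.sum_const, Finset.card_range,
      nsmul_eq_mul, birkhoffSum]
  calc _ ≤ ∑ j ∈ Finset.range m, |birkhoffSum T g n (T^[j] x) - birkhoffSum T g n x| :=
        hsum ▸ Finset.abs_sum_le_sum_abs _ _
    _ ≤ ∑ _j ∈ Finset.range m, 2 * m * B := Finset.sum_le_sum fun j hj => by
        have hjm : (j : ℝ) ≤ m := by exact_mod_cast (Finset.mem_range.1 hj).le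
        exact (abs_birkhoffSum_iterate_sub_le hB n j x).trans (by gcongr)
    _ = 2 * m ^ 2 * B := by rw [Finset.sum_const, Finset.card_range, nsmul_eq_mul]; ring

variable [MeasurableSpace X] {ν : Measure X}

lemma integrable_birkhoffSum (hT : MeasurePreserving T ν ν) (hg : Integrable g ν) (n : ℕ) :
    Integrable (birkhoffSum T g n) ν :=
  integrable_finsetSum _ fun k _ => (hT.iterate k).integrable_comp_of_integrable hg

lemma integral_birkhoffSum (hT : MeasurePreserving T ν ν) (hg : Integrable g ν) (n : ℕ) :
    ∫ x, birkhoffSum T g n x ∂ν = n * ∫ x, g x ∂ν := by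
  have hk (k : ℕ) : ∫ x, g (T^[k] x) ∂ν = ∫ x, g x ∂ν := by
    have hmap := (hT.iterate k).map_eq
    conv_rhs => rw [← hmap]
    exact (integral_map (hT.iterate k).aemeasurable (hmap.symm ▸ hg.aestronglyMeasurable)).symm
  calc ∫ x, birkhoffSum T g n x ∂ν = ∑ k ∈ Finset.range n, ∫ x, g (T^[k] x) ∂ν :=
        integral_finsetSum _ fun k _ => (hT.iterate k).integrable_comp_of_integrable hg
    _ = n * ∫ x, g x ∂ν := by simp [hk]

end Birkhoff

section UniqueErgodicity

variable {X : Type*} [MeasurableSpace X]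

/-- The measure `n⁻¹ ∑_{k < n} δ_{T^k x}` along an orbit segment; it is a probability measure
for `n ≠ 0` and the zero measure for `n = 0`. -/
def empiricalMeasure (T : X → X) (n : ℕ) (x : X) : Measure X :=
  (n : ENNReal)⁻¹ • ∑ k ∈ Finset.range n, Measure.dirac (T^[k] x)

lemma empiricalMeasure_eq_one {T : X → X} {n : ℕ} (hn : n ≠ 0) {K : Set X} (hK : MeasurableSet K)
    (hTK : Set.MapsTo T K K) {x : X} (hx : x ∈ K) : empiricalMeasure T n x K = 1 := by
  have hk (k : ℕ) : T^[k] x ∈ K := hTK.iterate k hx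
  simpa [empiricalMeasure, Measure.dirac_apply', hK, hk] using
    ENNReal.inv_mul_cancel (by simpa using hn) (ENNReal.natCast_ne_top n)

lemma isProbabilityMeasure_empiricalMeasure (T : X → X) {n : ℕ} (hn : n ≠ 0) (x : X) :
    IsProbabilityMeasure (empiricalMeasure T n x) :=
  ⟨empiricalMeasure_eq_one hn .univ (Set.mapsTo_univ _ _) (Set.mem_univ x)⟩

lemma integral_empiricalMeasure [MeasurableSingletonClass X] (T : X → X) (g : X → ℝ) (n : ℕ)
    (x : X) : ∫ z, g z ∂(empiricalMeasure T n x) = birkhoffAverage ℝ T g n x := by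
  rw [empiricalMeasure, integral_smul_measure,
    integral_finsetSum_measure fun k _ => integrable_dirac (by simp)]
  simp [birkhoffAverage, birkhoffSum]

/-- `μ` is the only `T`-invariant Borel probability measure that gives full mass to `K`. -/
structure IsUniquelyErgodicOn (T : X → X) (K : Set X) (μ : Measure X) : Prop where
  isProbabilityMeasure : IsProbabilityMeasure μ
  map_eq : μ.map T = μ
  measure_eq_one : μ K = 1
  eq_of_invariant : ∀ ν : Measure X, IsProbabilityMeasure ν → ν.map T = ν → ν K = 1 → ν = μ

lemma IsUniquelyErgodicOn.nonempty {T : X → X} {K : Set X} {μ : Measure X}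
    (hμ : IsUniquelyErgodicOn T K μ) : K.Nonempty :=
  nonempty_of_measure_ne_zero (hμ.measure_eq_one.trans_ne one_ne_zero)

variable [TopologicalSpace X] [HasOuterApproxClosed X] [BorelSpace X] {T : X → X} {K : Set X}

lemma map_eq_of_tendsto_birkhoffAverage {ι : Type*} {l : Filter ι} [l.NeBot] {n : ι → ℕ}
    {x : ι → X} (hT : Continuous T) (hn : Tendsto n l atTop) (ν : Measure X)
    [IsProbabilityMeasure ν]
    (hν : ∀ g : X → ℝ, Continuous g →
      Tendsto (fun i => birkhoffAverage ℝ T g (n i) (x i)) l (nhds (∫ z, g z ∂ν))) :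
    ν.map T = ν := by
  have := Measure.isProbabilityMeasure_map (μ := ν) hT.aemeasurable
  refine ext_of_forall_integral_eq_of_IsFiniteMeasure fun f => ?_
  rw [integral_map hT.aemeasurable f.continuous.aestronglyMeasurable]
  refine tendsto_nhds_unique (hν (f ∘ T) (f.continuous.comp hT)) ?_
  have hdiff : Tendsto (fun i => birkhoffAverage ℝ T (f ∘ T) (n i) (x i) -
      birkhoffAverage ℝ T f (n i) (x i)) l (nhds 0) := by
    have hlim : Tendsto (fun i => (n i : ℝ)⁻¹ * (2 * ‖f‖)) l (nhds 0) := by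
      simpa using ((tendsto_inv_atTop_nhds_zero_nat (𝕜 := ℝ)).comp hn).mul_const (2 * ‖f‖)
    refine squeeze_zero_norm (fun i => ?_) hlim
    have hcomp : birkhoffAverage ℝ T (f ∘ T) (n i) (x i) =
        birkhoffAverage ℝ T f (n i) (T (x i)) := by
      simp only [birkhoffAverage, birkhoffSum, Function.comp_apply,
        ← Function.iterate_succ_apply', Function.iterate_succ_apply]
    rw [hcomp, birkhoffAverage_apply_sub_birkhoffAverage, norm_smul, norm_inv, Real.norm_natCast]
    gcongr
    rw [← dist_eq_norm]
    exact f.dist_le_two_norm _ _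
  simpa using hdiff.add (hν f f.continuous)

variable [CompactSpace X] [T2Space X]

/-- **Krylov–Bogoliubov theorem** -/
theorem exists_invariant_tendsto_birkhoffAverage {ι : Type*} (l : Ultrafilter ι) {n : ι → ℕ}
    {x : ι → X} (hT : Continuous T) (hK : IsClosed K) (hTK : Set.MapsTo T K K)
    (hn : Tendsto n l atTop) (hn0 : ∀ i, n i ≠ 0) (hx : ∀ i, x i ∈ K) :
    ∃ ν : Measure X, IsProbabilityMeasure ν ∧ ν.map T = ν ∧ ν K = 1 ∧
      ∀ g : X → ℝ, Continuous g →
        Tendsto (fun i => birkhoffAverage ℝ T g (n i) (x i)) l (nhds (∫ z, g z ∂ν)) := by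
  let P (i : ι) : ProbabilityMeasure X :=
    ⟨empiricalMeasure T (n i) (x i), isProbabilityMeasure_empiricalMeasure T (hn0 i) (x i)⟩
  obtain ⟨ν, -, hν⟩ := isCompact_univ.ultrafilter_le_nhds (l.map P) (by simp)
  have hP : Tendsto P l (nhds ν) := hν
  have hlim (g : X → ℝ) (hg : Continuous g) :
      Tendsto (fun i => birkhoffAverage ℝ T g (n i) (x i)) l
        (nhds (∫ z, g z ∂(ν : Measure X))) := by
    simpa only [P, ProbabilityMeasure.coe_mk, BoundedContinuousFunction.mkOfCompact_apply,
      ContinuousMap.coe_mk, integral_empiricalMeasure] using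
      ProbabilityMeasure.tendsto_iff_forall_integral_tendsto.1 hP
        (BoundedContinuousFunction.mkOfCompact ⟨g, hg⟩)
  refine ⟨ν, inferInstance, map_eq_of_tendsto_birkhoffAverage hT hn ν hlim,
    le_antisymm prob_le_one ?_, hlim⟩
  have hPK (i : ι) : (P i : Measure X) K = 1 :=
    empiricalMeasure_eq_one (hn0 i) hK.measurableSet hTK (hx i)
  simpa [hPK] using ProbabilityMeasure.limsup_measure_closed_le_of_tendsto hP hK

/-- **Oxtoby's theorem** -/
theorem IsUniquelyErgodicOn.tendstoUniformlyOn_birkhoffAverage {μ : Measure X}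
    (hμ : IsUniquelyErgodicOn T K μ) (hT : Continuous T) (hK : IsClosed K)
    (hTK : Set.MapsTo T K K) {g : X → ℝ} (hg : Continuous g) :
    TendstoUniformlyOn (birkhoffAverage ℝ T g) (fun _ => ∫ z, g z ∂μ) atTop K := by
  refine Metric.tendstoUniformlyOn_iff.2 fun ε hε => ?_
  by_contra hcon
  rw [not_eventually] at hcon
  obtain ⟨n, hn, h⟩ := extraction_of_frequently_atTop (hcon.and_eventually (eventually_ne_atTop 0))
  simp only [not_forall, not_lt] at h
  choose h hn0 using h
  choose x hx hfar using h
  obtain ⟨ν, hνp, hνT, hνK, hlim⟩ := exists_invariant_tendsto_birkhoffAverage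
    (Ultrafilter.of atTop) hT hK hTK (hn.tendsto_atTop.mono_left (Ultrafilter.of_le _)) hn0 hx
  rw [hμ.eq_of_invariant ν hνp hνT hνK] at hlim
  have hdist := (tendsto_const_nhds (x := ∫ z, g z ∂μ)).dist (hlim g hg)
  rw [dist_self] at hdist
  exact hε.not_ge (ge_of_tendsto' hdist hfar)

theorem IsUniquelyErgodicOn.exists_birkhoffSum_le {μ : Measure X}
    (hμ : IsUniquelyErgodicOn T K μ) (hT : Continuous T) (hK : IsClosed K)
    (hTK : Set.MapsTo T K K) {g : X → ℝ} (hg : Continuous g) {η : ℝ} (hη : 0 < η) :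
    ∃ C : ℝ, ∀ n, ∀ x ∈ K, birkhoffSum T g n x ≤ n * (∫ z, g z ∂μ + η) + C := by
  obtain ⟨N, hN⟩ := eventually_atTop.1 (Metric.tendstoUniformlyOn_iff.1
    (hμ.tendstoUniformlyOn_birkhoffAverage hT hK hTK hg) η hη)
  obtain ⟨B, hB⟩ := (isCompact_range hg).isBounded.exists_norm_le
  refine ⟨N * (|B| + |∫ z, g z ∂μ + η|), fun n x hx => ?_⟩
  have hC : 0 ≤ N * (|B| + |∫ z, g z ∂μ + η|) := by positivity
  rcases le_or_gt N n with hn | hn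
  · rcases n.eq_zero_or_pos with rfl | hpos
    · simpa using hC
    have hpos' : (0 : ℝ) < n := Nat.cast_pos.2 hpos
    have havg : (n : ℝ)⁻¹ * birkhoffSum T g n x < ∫ z, g z ∂μ + η := by
      linarith [(abs_lt.1 (hN n hn x hx)).1, smul_eq_mul (n : ℝ)⁻¹ (birkhoffSum T g n x),
        birkhoffAverage.eq_1 ℝ T g n x]
    rw [inv_mul_lt_iff₀ hpos'] at havg
    linarith
  · have hsum := (le_abs_self _).trans <| abs_birkhoffSum_le (T := T)
      (fun z => (hB _ ⟨z, rfl⟩).trans (le_abs_self B)) n x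
    have hmean : n * -|∫ z, g z ∂μ + η| ≤ n * (∫ z, g z ∂μ + η) := by
      gcongr; exact neg_abs_le _
    have hnN : n * (|B| + |∫ z, g z ∂μ + η|) ≤ N * (|B| + |∫ z, g z ∂μ + η|) := by gcongr
    linarith

end UniqueErgodicity

section InfMean

/-- The infimum `inf_{n ≥ 1} a n / n`; both the Lyapunov exponent `LamOp` and the joint spectral
radius `logSprOp` are of this form. The junk value `0` occurs only if `a n / n` is unbounded
below. -/
def infMean (a : ℕ → ℝ) : ℝ :=
  ⨅ n : ℕ, ((n : ℝ) + 1)⁻¹ * a (n + 1)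

variable {a b : ℕ → ℝ} {B : ℝ}

lemma infMean_le (ha : ∀ n, -(n * B) ≤ a n) (n : ℕ) : infMean a ≤ ((n : ℝ) + 1)⁻¹ * a (n + 1) := by
  refine ciInf_le ⟨-B, ?_⟩ n
  rintro _ ⟨n, rfl⟩
  change -B ≤ ((n : ℝ) + 1)⁻¹ * a (n + 1)
  have h := ha (n + 1)
  push_cast at h
  rw [← div_eq_inv_mul, le_div_iff₀ (by positivity)]
  linarith

lemma infMean_mono (ha : ∀ n, -(n * B) ≤ a n) (hab : ∀ n, a n ≤ b n) : infMean a ≤ infMean b :=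
  le_ciInf fun n => (infMean_le ha n).trans (by gcongr; exact hab _)

lemma infMean_le_of_forall_le_mul_add (ha : ∀ n, -(n * B) ≤ a n) {s C : ℝ}
    (h : ∀ n : ℕ, a n ≤ n * s + C) : infMean a ≤ s := by
  have hlim : Tendsto (fun n : ℕ => s + ((n : ℝ) + 1)⁻¹ * C) atTop (nhds s) := by
    simpa using (tendsto_one_div_add_atTop_nhds_zero_nat (𝕜 := ℝ)).mul_const C |>.const_add s
  refine ge_of_tendsto' hlim fun n => (infMean_le ha n).trans ?_
  have hn := h (n + 1)
  push_cast at hn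
  rw [inv_mul_le_iff₀ (by positivity), mul_add, mul_inv_cancel_left₀ (by positivity)]
  exact hn

end InfMean
section DiagonalOperators

variable {ι 𝕜 E : Type*} [RCLike 𝕜]

lemma exists_lp_mul_norm_le (p : ENNReal) [hp : Fact (1 ≤ p)] {c : ι → 𝕜} {M : ℝ} (hM : 0 ≤ M)
    (hc : ∀ i, ‖c i‖ ≤ M) :
    ∃ D : lp (fun _ : ι => 𝕜) p →L[𝕜] lp (fun _ : ι => 𝕜) p,
      (∀ f i, D f i = c i * f i) ∧ ‖D‖ ≤ M := by
  have hle (f : lp (fun _ : ι => 𝕜) p) (i : ι) : ‖c i * f i‖ ≤ ‖((M : 𝕜) • f) i‖ := by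
    simpa [norm_smul, abs_of_nonneg hM] using mul_le_mul_of_nonneg_right (hc i) (norm_nonneg (f i))
  let D : lp (fun _ : ι => 𝕜) p →ₗ[𝕜] lp (fun _ : ι => 𝕜) p :=
    { toFun f := ⟨fun i => c i * f i, (lp.memℓp ((M : 𝕜) • f)).mono' (hle f)⟩
      map_add' f g := lp.ext (funext fun i => mul_add (c i) (f i) (g i))
      map_smul' a f := lp.ext (funext fun i => mul_left_comm (c i) a (f i)) }
  have hD (f : lp (fun _ : ι => 𝕜) p) : ‖D f‖ ≤ M * ‖f‖ := by
    simpa [norm_smul, abs_of_nonneg hM] using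
      lp.norm_mono (zero_lt_one.trans_le hp.out).ne' (x := D f) (hle f)
  exact ⟨D.mkContinuous M hD, fun _ _ => rfl, D.mkContinuous_norm_le hM hD⟩

variable [NormedAddCommGroup E] [InnerProductSpace 𝕜 E] [CompleteSpace E] {e : HilbertBasis ι 𝕜 E}
  {v : ι → E} {c : ι → 𝕜}

lemma exists_apply_eq_smul_norm_le (e : HilbertBasis ι 𝕜 E) (hv : Orthonormal 𝕜 v) {M : ℝ}
    (hM : 0 ≤ M) (hc : ∀ i, ‖c i‖ ≤ M) :
    ∃ D : E →L[𝕜] E, (∀ i, D (e i) = c i • v i) ∧ ‖D‖ ≤ M := by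
  classical
  obtain ⟨D, hD, hDM⟩ := exists_lp_mul_norm_le 2 hM hc
  have hsingle (i : ι) : D (lp.single 2 i 1) = lp.single 2 i (c i) := by
    ext j
    rcases eq_or_ne j i with rfl | hji
    · simp [hD]
    · simp [hD, hji]
  let V := hv.orthogonalFamily.linearIsometry
  refine ⟨V.toContinuousLinearMap ∘L D ∘L e.repr.toContinuousLinearEquiv, fun i => ?_,
    ContinuousLinearMap.opNorm_le_bound _ hM fun x => ?_⟩
  · simp [V, e.repr_self, hsingle]
  · simpa [V] using D.le_of_opNorm_le hDM (e.repr x)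

lemma isLUB_norm_of_apply_eq_smul [Nonempty ι] {D : E →L[𝕜] E} (hv : Orthonormal 𝕜 v)
    (hD : ∀ i, D (e i) = c i • v i) : IsLUB (Set.range fun i => ‖c i‖) ‖D‖ := by
  refine ⟨?_, fun M hM => ?_⟩
  · rintro _ ⟨i, rfl⟩
    simpa [hD, norm_smul, e.orthonormal.1, hv.1] using D.le_opNorm (e i)
  · have hc (i : ι) : ‖c i‖ ≤ M := hM ⟨i, rfl⟩
    obtain ⟨D', hD', hnorm⟩ := exists_apply_eq_smul_norm_le e hv
      ((norm_nonneg _).trans (hc (Classical.arbitrary ι))) hc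
    have hDD' : D = D' := by
      refine ContinuousLinearMap.ext_on
        (Submodule.dense_iff_topologicalClosure_eq_top.2 e.dense_span) ?_
      rintro _ ⟨i, rfl⟩
      rw [hD, hD']
    exact hDD' ▸ hnorm

end DiagonalOperators

section WeightedShifts

/-- The total weight `∑_{k < n} φ (x k) (i + k)` collected when the word `x 0 ⋯ x (n - 1)` is
read from the site `i` onwards. With `φ b i` the logarithm of the weight at `i` of the shift `L_b`,
its supremum over `i` is the logarithm of the norm of the operator product along `x`. -/
def pathSum (φ : Bool → ℤ → ℝ) (n : ℕ) (x : Sig) (i : ℤ) : ℝ :=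
  ∑ k ∈ Finset.range n, φ (x k) (i + k)

variable {E : Type*} [NormedAddCommGroup E] [InnerProductSpace ℝ E]

/-- `p = (L₀, L₁)` is the pair of weighted shifts `L_b e_i = w b i • e_{i+1}`; the symbol `true`
stands for `1`. -/
def HasWeights (e : HilbertBasis ℤ ℝ E) (p : (E →L[ℝ] E) × (E →L[ℝ] E)) (w : Bool → ℤ → ℝ) : Prop :=
  ∀ b i, (if b then p.2 else p.1) (e i) = w b i • e (i + 1)

variable {e : HilbertBasis ℤ ℝ E} {p p' : (E →L[ℝ] E) × (E →L[ℝ] E)} {w w' : Bool → ℤ → ℝ}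

lemma mem_WSet_iff :
    p ∈ WSet e ↔ ∃ w : Bool → ℤ → ℝ, (∃ c : ℝ, 0 < c ∧ ∀ b i, c ≤ w b i) ∧ HasWeights e p w := by
  constructor
  · rintro ⟨α, β, ⟨a, ha, hα⟩, ⟨b, hb, hβ⟩, h₀, h₁⟩
    refine ⟨fun s => if s then β else α, ⟨min a b, lt_min ha hb, ?_⟩, ?_⟩
    · rintro (_ | _) i
      · exact (min_le_left a b).trans (hα i)
      · exact (min_le_right a b).trans (hβ i)
    · rintro (_ | _) i
      · exact h₀ i
      · exact h₁ i
  · rintro ⟨w, ⟨c, hc, hw⟩, h⟩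
    exact ⟨w false, w true, ⟨c, hc, hw false⟩, ⟨c, hc, hw true⟩, h false, h true⟩

lemma HasWeights.abs_sub_le_dist (h : HasWeights e p w) (h' : HasWeights e p' w') (b : Bool)
    (i : ℤ) : |w b i - w' b i| ≤ dist p p' := by
  have hb : ‖(if b then p.2 else p.1) - (if b then p'.2 else p'.1)‖ ≤ dist p p' := by
    cases b
    · exact (dist_eq_norm p.1 p'.1).symm.trans_le (le_max_left _ _)
    · exact (dist_eq_norm p.2 p'.2).symm.trans_le (le_max_right _ _)
  have hle := ((if b then p.2 else p.1) - (if b then p'.2 else p'.1)).le_of_opNorm_le hb (e i)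
  rwa [sub_apply, h b i, h' b i, ← sub_smul, norm_smul, e.orthonormal.1,
    e.orthonormal.1, mul_one, mul_one] at hle

lemma opProd_zero (x : Sig) : opProd p x 0 = 1 := rfl

lemma opProd_succ (x : Sig) (n : ℕ) :
    opProd p x (n + 1) = (if x n then p.2 else p.1) * opProd p x n := by
  unfold opProd
  rw [List.ofFn_succ', List.concat_eq_append, List.reverse_append]
  simp

lemma HasWeights.opProd_apply (h : HasWeights e p w) (x : Sig) (n : ℕ) (i : ℤ) :
    opProd p x n (e i) = (∏ k ∈ Finset.range n, w (x k) (i + k)) • e (i + n) := by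
  induction n with
  | zero => simp [opProd_zero]
  | succ n ih =>
    rw [opProd_succ, mul_apply_eq_comp, ih, map_smul, h, smul_smul,
      Finset.prod_range_succ, Nat.cast_succ, add_assoc]

variable [CompleteSpace E]

lemma exists_hasWeights (e : HilbertBasis ℤ ℝ E) {M : ℝ} (hw : ∀ b i, |w b i| ≤ M) :
    ∃ p, HasWeights e p w := by
  have hM : 0 ≤ M := (abs_nonneg _).trans (hw false 0)
  have hv : Orthonormal ℝ fun i : ℤ => e (i + 1) :=
    e.orthonormal.comp (· + 1) (add_left_injective 1)
  choose D hD _ using fun b => exists_apply_eq_smul_norm_le e hv hM (hw b)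
  refine ⟨(D false, D true), ?_⟩
  rintro (_ | _) i
  · exact hD false i
  · exact hD true i

lemma HasWeights.isLUB_norm_opProd (h : HasWeights e p w) (hw : ∀ b i, 0 < w b i) (x : Sig)
    (n : ℕ) : IsLUB (Set.range fun i => Real.exp (pathSum (fun b i => Real.log (w b i)) n x i))
      ‖opProd p x n‖ := by
  convert isLUB_norm_of_apply_eq_smul (e.orthonormal.comp (· + (n : ℤ)) (add_left_injective _))
    (h.opProd_apply x n) using 4 with i
  rw [pathSum, Real.exp_sum, Real.norm_of_nonneg (Finset.prod_nonneg fun k _ => (hw _ _).le)]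
  exact Finset.prod_congr rfl fun k _ => Real.exp_log (hw _ _)

lemma HasWeights.norm_opProd_pos (h : HasWeights e p w) (hw : ∀ b i, 0 < w b i) (x : Sig)
    (n : ℕ) : 0 < ‖opProd p x n‖ :=
  (Real.exp_pos _).trans_le ((h.isLUB_norm_opProd hw x n).1 ⟨0, rfl⟩)

lemma HasWeights.isLUB_log_norm_opProd (h : HasWeights e p w) (hw : ∀ b i, 0 < w b i) (x : Sig)
    (n : ℕ) : IsLUB (Set.range (pathSum (fun b i => Real.log (w b i)) n x))
      (Real.log ‖opProd p x n‖) := by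
  obtain ⟨hupper, hleast⟩ := h.isLUB_norm_opProd hw x n
  refine ⟨?_, fun M hM => ?_⟩
  · rintro _ ⟨i, rfl⟩
    exact (Real.le_log_iff_exp_le (h.norm_opProd_pos hw x n)).2 (hupper ⟨i, rfl⟩)
  · refine (Real.log_le_iff_le_exp (h.norm_opProd_pos hw x n)).2 (hleast ?_)
    rintro _ ⟨i, rfl⟩
    exact Real.exp_le_exp.2 (hM ⟨i, rfl⟩)

end WeightedShifts

section Patterns

variable {ι A : Type*}

/-- The points whose restriction to the sites `I` extends to no point of `K`; for a subshift `K`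
and a finite `I` this is the set of points showing a forbidden pattern on `I`. -/
def offPattern (K : Set (ι → A)) (I : Set ι) : Set (ι → A) :=
  {x | ∀ y ∈ K, ¬ Set.EqOn y x I}

lemma offPattern_mono (K : Set (ι → A)) {I J : Set ι} (h : I ⊆ J) :
    offPattern K I ⊆ offPattern K J :=
  fun _ hx y hy hyx => hx y hy (hyx.mono h)

variable [TopologicalSpace A] {I : Set ι} {K : Set (ι → A)}

lemma exists_mem_offPattern (hK : IsClosed K) {x : ι → A} (hx : x ∉ K) :
    ∃ I : Finset ι, x ∈ offPattern K I := by
  obtain ⟨I, U, hU, hsub⟩ := isOpen_pi_iff.1 hK.isOpen_compl x hx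
  exact ⟨I, fun y hy hyx => hsub (fun i hi => hyx hi ▸ (hU i hi).2) hy⟩

variable [DiscreteTopology A]

lemma isOpen_setOf_eqOn (hI : I.Finite) (y : ι → A) : IsOpen {x : ι → A | Set.EqOn y x I} := by
  convert isOpen_set_pi hI (s := fun i => {y i}) fun i _ => isOpen_discrete _ using 1
  ext x
  simp [Set.EqOn, eq_comm]

lemma isOpen_offPattern (hI : I.Finite) : IsOpen (offPattern K I) :=
  isOpen_iff_forall_mem_open.2 fun x hx =>
    ⟨{z | Set.EqOn x z I}, fun _ hz y hy hyz => hx y hy (hyz.trans hz.symm),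
      isOpen_setOf_eqOn hI x, Set.eqOn_refl x I⟩

lemma exists_seq_mem_forall_eqOn [Countable ι] [Countable A] (hne : K.Nonempty) :
    ∃ Y : ℕ → ι → A, (∀ q, Y q ∈ K) ∧
      ∀ y ∈ K, ∀ I : Set ι, I.Finite → ∃ q, Set.EqOn (Y q) y I := by
  have := hne.to_subtype
  have : SecondCountableTopology A := DiscreteTopology.secondCountableTopology_of_countable
  obtain ⟨Y, hY⟩ := TopologicalSpace.exists_dense_seq K
  refine ⟨fun q => Y q, fun q => (Y q).2, fun y hy I hI => ?_⟩
  obtain ⟨q, hq⟩ := hY.exists_mem_open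
    ((isOpen_setOf_eqOn hI y).preimage continuous_subtype_val) ⟨⟨y, hy⟩, Set.eqOn_refl y I⟩
  exact ⟨q, Set.EqOn.symm hq⟩

end Patterns

section Shift

variable {K : Set Sig} {ν : Measure Sig}

lemma continuous_shift : Continuous shift :=
  continuous_pi fun i => continuous_apply (i + 1)

lemma shift_iterate_apply (k : ℕ) (x : Sig) (i : ℤ) : (shift^[k] x) i = x (i + k) := by
  induction k generalizing x with
  | zero => simp
  | succ k ih => rw [Function.iterate_succ_apply, ih, shift, Nat.cast_succ, add_assoc]

lemma isClosed_suppM (ν : Measure Sig) : IsClosed (suppM ν) := by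
  have hsupport : suppM ν = ν.support := by
    ext x
    simp [suppM, Measure.support_eq_forall_isOpen, imp.swap]
  exact hsupport ▸ Measure.isClosed_support

lemma mapsTo_shift_suppM (hν : ν.map shift = ν) : Set.MapsTo shift (suppM ν) (suppM ν) := by
  intro x hx U hU hxU
  rw [← hν, Measure.map_apply continuous_shift.measurable hU.measurableSet]
  exact hx _ (hU.preimage continuous_shift) hxU

lemma preimage_shift_iterate_offPattern_subset (hK : Set.MapsTo shift K K) (m : ℕ) :
    shift^[m] ⁻¹' offPattern K (Set.Icc (-m) m) ⊆ offPattern K (Set.Ico 0 (2 * m + 1)) := by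
  intro x hx y hy hyx
  refine hx _ (hK.iterate m hy) fun i hi => ?_
  rw [shift_iterate_apply, shift_iterate_apply]
  exact hyx ⟨by linarith [hi.1], by linarith [hi.2]⟩

lemma exists_measureReal_offPattern_pos [IsProbabilityMeasure ν] (hK : IsClosed K)
    (hshift : Set.MapsTo shift K K) (hν : ν.map shift = ν) (hνK : ν K ≠ 1) :
    ∃ r : ℕ, 0 < r ∧ 0 < ν.real (offPattern K (Set.Ico 0 r)) := by
  have hcompl : ν (⋃ I : Finset ℤ, offPattern K I) ≠ 0 := fun h => hνK <| by
    rw [prob_compl_eq_zero_iff hK.measurableSet |>.1]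
    exact measure_mono_null (fun x hx => Set.mem_iUnion.2 (exists_mem_offPattern hK hx)) h
  obtain ⟨I, hI⟩ := exists_measure_pos_of_not_measure_iUnion_null hcompl
  obtain ⟨m, hm⟩ : ∃ m : ℕ, (I : Set ℤ) ⊆ Set.Icc (-m) m := by
    refine ⟨I.sup Int.natAbs, fun i hi => ?_⟩
    have := Finset.le_sup (f := Int.natAbs) hi
    constructor <;> omega
  have hpreserving : MeasurePreserving shift ν ν := ⟨continuous_shift.measurable, hν⟩
  refine ⟨2 * m + 1, by positivity, ENNReal.toReal_pos (hI.trans_le ?_).ne' (measure_ne_top _ _)⟩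
  calc ν (offPattern K I) ≤ ν (offPattern K (Set.Icc (-m) m)) :=
        measure_mono (offPattern_mono K hm)
    _ = ν (shift^[m] ⁻¹' offPattern K (Set.Icc (-m) m)) :=
        ((hpreserving.iterate m).measure_preimage
          (isOpen_offPattern (Set.finite_Icc _ _)).measurableSet.nullMeasurableSet).symm
    _ ≤ ν (offPattern K (Set.Ico 0 ((2 * m + 1 : ℕ) : ℤ))) := measure_mono <| by
        simpa using preimage_shift_iterate_offPattern_subset hshift m

end Shift

section Marking

open Classical in
/-- A set `G` of marked sites and a symbol `u z` at each site that spell out the subshift `K`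
sparsely: a window of sites is at least half unmarked unless its marked sites form an interval
which carries a word of `K`, and every word of `K` is spelled out in full somewhere. -/
structure IsSparseMarking (K : Set Sig) (G : Set ℤ) (u : ℤ → Bool) : Prop where
  sparse : ∀ (i : ℤ) (n : ℕ), n ≤ 2 * ((Finset.range n).filter (fun k : ℕ => i + k ∉ G)).card ∨
    ∃ s t : ℕ, t ≤ n ∧ (∀ k < n, i + k ∈ G ↔ k ∈ Finset.Ico s t) ∧
      ∃ y ∈ K, ∀ k ∈ Finset.Ico s t, u (i + k) = y (k - s)
  recurrent : ∀ y ∈ K, ∀ n : ℕ, ∃ i : ℤ, ∀ k : ℕ, k < n → i + k ∈ G ∧ u (i + k) = y k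

/-- The union of the blocks `[8 ^ J, 8 ^ J + J)`: each length occurs, and the gap in front of a
block is longer than everything before it together with the block itself. -/
def markedSites : Set ℤ :=
  ⋃ J : ℕ, Set.Ico (8 ^ J) (8 ^ J + J)

/-- The word whose `J`-th block, with `J = Nat.pair q n`, is the initial word of `Y q`. -/
def markedWord (Y : ℕ → Sig) (z : ℤ) : Bool :=
  Y (Nat.unpair (Nat.log 8 z.toNat)).1 (z - 8 ^ Nat.log 8 z.toNat)

lemma cast_lt_eight_pow (J : ℕ) : (J : ℤ) < 8 ^ J := by
  exact_mod_cast Nat.lt_pow_self (by norm_num : 1 < 8)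

lemma log_toNat_eq_of_mem_Ico {J : ℕ} {z : ℤ} (hz : z ∈ Set.Ico (8 ^ J : ℤ) (8 ^ J + J)) :
    Nat.log 8 z.toNat = J := by
  have hJ := cast_lt_eight_pow J
  have hpow : (0 : ℤ) < 8 ^ J := by positivity
  lift z to ℕ using hpow.le.trans hz.1
  rw [Int.toNat_natCast, Nat.log_eq_iff (Or.inr ⟨by norm_num, by have := hz.1; omega⟩)]
  have hz' : (z : ℤ) < 8 ^ (J + 1) := by rw [pow_succ]; linarith [hz.2]
  exact ⟨by exact_mod_cast hz.1, by exact_mod_cast hz'⟩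

lemma markedWord_of_mem_Ico (Y : ℕ → Sig) {J : ℕ} {z : ℤ}
    (hz : z ∈ Set.Ico (8 ^ J : ℤ) (8 ^ J + J)) :
    markedWord Y z = Y (Nat.unpair J).1 (z - 8 ^ J) := by
  rw [markedWord, log_toNat_eq_of_mem_Ico hz]

lemma mem_Ico_of_mem_markedSites {b : ℕ} {z : ℤ} (hz : z ∈ markedSites) (hzb : z < 8 ^ (b + 1)) :
    z ∈ Set.Ico 1 (8 ^ b + b : ℤ) := by
  obtain ⟨j, hj, hj'⟩ := Set.mem_iUnion.1 hz
  have hjb : j ≤ b :=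
    Nat.lt_succ_iff.1 ((pow_lt_pow_iff_right₀ (by norm_num)).1 (hj.trans_lt hzb))
  have hpow : (8 : ℤ) ^ j ≤ 8 ^ b := pow_le_pow_right₀ (by norm_num) hjb
  exact ⟨(one_le_pow₀ (by norm_num)).trans hj, by omega⟩

open Classical in
lemma le_two_mul_card_unmarked {i : ℤ} {n b : ℕ} {z₁ z₂ : ℤ} (hz₁ : z₁ ∈ Set.Ico i (i + n))
    (hz₂ : z₂ ∈ Set.Ico i (i + n)) (h₁ : z₁ < 8 ^ b + b) (h₂ : 8 ^ (b + 1) ≤ z₂)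
    (h : ∀ z ∈ Set.Ico i (i + n), z ∈ markedSites → z < 8 ^ (b + 1) + (b + 1)) :
    n ≤ 2 * ((Finset.Ico i (i + n)).filter (· ∉ markedSites)).card := by
  have hgap : (8 : ℤ) ^ (b + 1) ≥ 2 * (8 ^ b + b) + (b + 1) := by
    rw [pow_succ]
    linarith [cast_lt_eight_pow b, one_le_pow₀ (n := b) (by norm_num : (1 : ℤ) ≤ 8)]
  have hmarked : ((Finset.Ico i (i + n)).filter (· ∈ markedSites)).card ≤
      (Finset.Ico (1 : ℤ) (8 ^ b + b) ∪ Finset.Ico (8 ^ (b + 1)) (8 ^ (b + 1) + (b + 1))).card := by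
    refine Finset.card_le_card fun z hz => ?_
    obtain ⟨hzI, hzm⟩ := Finset.mem_filter.1 hz
    rw [Finset.mem_union, Finset.mem_Ico, Finset.mem_Ico]
    rcases lt_or_ge z (8 ^ (b + 1)) with hlt | hge
    · exact .inl (mem_Ico_of_mem_markedSites hzm hlt)
    · exact .inr ⟨hge, h z (by simpa using hzI) hzm⟩
  have hunmarked : (Finset.Ico (8 ^ b + b : ℤ) (8 ^ (b + 1))).card ≤
      ((Finset.Ico i (i + n)).filter (· ∉ markedSites)).card := by
    refine Finset.card_le_card fun z hz => ?_
    obtain ⟨hle, hlt⟩ := Finset.mem_Ico.1 hz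
    refine Finset.mem_filter.2 ⟨Finset.mem_Ico.2 ⟨?_, ?_⟩, fun hzm => ?_⟩
    · linarith [hz₁.1]
    · linarith [hz₂.2]
    · exact (mem_Ico_of_mem_markedSites hzm hlt).2.not_ge hle
  have hunion := hmarked.trans (Finset.card_union_le _ _)
  have hadd := Finset.card_filter_add_card_filter_not (s := Finset.Ico i (i + n))
    (· ∈ markedSites)
  simp only [Int.card_Ico] at hunion hunmarked hadd
  omega

open Classical in
lemma le_two_mul_card_unmarked_or_exists_Ico (i : ℤ) (n : ℕ) :
    n ≤ 2 * ((Finset.Ico i (i + n)).filter (· ∉ markedSites)).card ∨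
      ∃ J : ℕ, ∀ z ∈ Set.Ico i (i + n), z ∈ markedSites ↔ z ∈ Set.Ico (8 ^ J : ℤ) (8 ^ J + J) := by
  rcases ((Finset.Ico i (i + n)).filter (· ∈ markedSites)).eq_empty_or_nonempty with h | h
  · exact .inr ⟨0, fun z hz => by simpa using Finset.filter_eq_empty_iff.1 h (by simpa using hz)⟩
  obtain ⟨z₂, hz₂, hmax⟩ := Finset.exists_max_image _ id h
  simp only [Finset.mem_filter, Finset.mem_Ico, id, and_imp] at hz₂ hmax
  obtain ⟨J, hJ, hJ'⟩ := Set.mem_iUnion.1 hz₂.2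
  by_cases hlow : ∃ z₁ ∈ Set.Ico i (i + n), z₁ ∈ markedSites ∧ z₁ < 8 ^ J
  · obtain ⟨z₁, hz₁, hz₁m, hlt⟩ := hlow
    obtain ⟨b, rfl⟩ : ∃ b, J = b + 1 := Nat.exists_eq_succ_of_ne_zero <| by
      rintro rfl
      norm_num at hJ hJ'
      omega
    refine .inl (le_two_mul_card_unmarked hz₁ hz₂.1 (mem_Ico_of_mem_markedSites hz₁m hlt).2 hJ
      fun z hz hzm => ?_)
    push_cast at hJ'
    exact (hmax z hz.1 hz.2 hzm).trans_lt hJ'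
  · push Not at hlow
    exact .inr ⟨J, fun z hz => ⟨fun hzm => ⟨hlow z hz hzm, (hmax z hz.1 hz.2 hzm).trans_lt hJ'⟩,
      fun hzJ => Set.mem_iUnion.2 ⟨J, hzJ⟩⟩⟩

lemma card_filter_int_Ico (P : ℤ → Prop) [DecidablePred P] (i : ℤ) (n : ℕ) :
    ((Finset.Ico i (i + n)).filter P).card =
      ((Finset.range n).filter fun k : ℕ => P (i + k)).card := by
  have hmap : Finset.Ico i (i + n) =
      (Finset.range n).map (Nat.castEmbedding.trans (addLeftEmbedding i)) := by
    conv_rhs => rw [show n = (i + n - i).toNat by omega]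
    rfl
  rw [hmap, Finset.filter_map, Finset.card_map]
  rfl

lemma exists_mem_forall_markedWord_eq {K : Set Sig} (hK : Set.MapsTo shift K K) {Y : ℕ → Sig}
    (hY : ∀ q, Y q ∈ K) (J : ℕ) (i : ℤ) : ∃ y ∈ K, ∀ k ∈ Finset.Ico (8 ^ J - i).toNat
      (8 ^ J + J - i).toNat, markedWord Y (i + k) = y (k - (8 ^ J - i).toNat) := by
  refine ⟨shift^[(i - 8 ^ J).toNat] (Y (Nat.unpair J).1), hK.iterate _ (hY _), fun k hk => ?_⟩
  rw [Finset.mem_Ico] at hk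
  rw [markedWord_of_mem_Ico Y (J := J) ⟨by omega, by omega⟩, shift_iterate_apply]
  congr 1
  omega

theorem isSparseMarking_markedSites {K : Set Sig} (hK : Set.MapsTo shift K K) {Y : ℕ → Sig}
    (hY : ∀ q, Y q ∈ K) (hdense : ∀ y ∈ K, ∀ I : Set ℤ, I.Finite → ∃ q, Set.EqOn (Y q) y I) :
    IsSparseMarking K markedSites (markedWord Y) := by
  classical
  refine ⟨fun i n => ?_, fun y hy n => ?_⟩
  · rw [← card_filter_int_Ico (· ∉ markedSites) i n]
    refine (le_two_mul_card_unmarked_or_exists_Ico i n).imp id ?_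
    rintro ⟨J, hJ⟩
    obtain ⟨y, hy, hword⟩ := exists_mem_forall_markedWord_eq hK hY J i
    refine ⟨(8 ^ J - i).toNat, min n (8 ^ J + J - i).toNat, min_le_left _ _, fun k hk => ?_,
      y, hy, fun k hk => hword k (Finset.Ico_subset_Ico_right (min_le_right _ _) hk)⟩
    rw [hJ (i + k) ⟨by omega, by omega⟩, Set.mem_Ico, Finset.mem_Ico]
    omega
  · obtain ⟨q, hq⟩ := hdense y hy (Set.Ico 0 n) (Set.finite_Ico _ _)
    have hn := Nat.right_le_pair q n
    refine ⟨8 ^ Nat.pair q n, fun k hk => ?_⟩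
    have hmem : 8 ^ Nat.pair q n + (k : ℤ) ∈
        Set.Ico (8 ^ Nat.pair q n : ℤ) (8 ^ Nat.pair q n + (Nat.pair q n : ℕ)) :=
      ⟨by omega, by omega⟩
    refine ⟨Set.mem_iUnion.2 ⟨_, hmem⟩, ?_⟩
    rw [markedWord_of_mem_Ico Y hmem, Nat.unpair_pair, add_sub_cancel_left]
    exact hq ⟨by omega, by omega⟩

end Marking

section PathSums

variable {φ ψ : Bool → ℤ → ℝ}

lemma pathSum_eq_birkhoffSum (φ : Bool → ℤ → ℝ) (n : ℕ) (x : Sig) (i : ℤ) :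
    pathSum φ n x i = birkhoffSum (Prod.map shift (· + 1)) (fun q => φ (q.1 0) q.2) n (x, i) := by
  simp [pathSum, birkhoffSum, Prod.map_iterate, add_right_iterate, shift_iterate_apply]

lemma abs_pathSum_le {B : ℝ} (hB : ∀ b i, |φ b i| ≤ B) (n : ℕ) (x : Sig) (i : ℤ) :
    |pathSum φ n x i| ≤ n * B := by
  rw [pathSum_eq_birkhoffSum]
  exact abs_birkhoffSum_le (fun _ => hB _ _) n _

lemma abs_sum_pathSum_sub_le {B : ℝ} (hB : ∀ b i, |φ b i| ≤ B) (m n : ℕ) (x : Sig) (i : ℤ) :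
    |∑ k ∈ Finset.range n, pathSum φ m (shift^[k] x) (i + k) - m * pathSum φ n x i| ≤
      2 * m ^ 2 * B := by
  let g : Sig × ℤ → ℝ := fun q => φ (q.1 0) q.2
  have hsum : ∑ k ∈ Finset.range n, pathSum φ m (shift^[k] x) (i + k) =
      birkhoffSum (Prod.map shift (· + 1)) (birkhoffSum (Prod.map shift (· + 1)) g m) n (x, i) :=
    Finset.sum_congr rfl fun k _ => by
      rw [pathSum_eq_birkhoffSum, Prod.map_iterate, Prod.map_apply, add_right_iterate, nsmul_one]
  rw [hsum, pathSum_eq_birkhoffSum]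
  exact abs_birkhoffSum_birkhoffSum_sub_le (fun _ => hB _ _) m n (x, i)

lemma exists_pathSum_le {K : Set Sig} {μ : Measure Sig} (hμ : IsUniquelyErgodicOn shift K μ)
    (hK : IsClosed K) (hshift : Set.MapsTo shift K K) {B : ℝ} (hB : ∀ b i, |φ b i| ≤ B) {m : ℕ}
    (hm : 0 < m) {g : Sig → ℝ} (hg : Continuous g) (hφg : ∀ x i, pathSum φ m x i ≤ g x) {η : ℝ}
    (hη : 0 < η) :
    ∃ C, ∀ n, ∀ y ∈ K, ∀ i, pathSum φ n y i ≤ n * ((m : ℝ)⁻¹ * ∫ x, g x ∂μ + η) + C := by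
  have hm' : (0 : ℝ) < m := Nat.cast_pos.2 hm
  obtain ⟨C, hC⟩ := hμ.exists_birkhoffSum_le continuous_shift hK hshift hg (mul_pos hm' hη)
  refine ⟨(m : ℝ)⁻¹ * (C + 2 * m ^ 2 * B), fun n y hy i => ?_⟩
  have hle : ∑ k ∈ Finset.range n, pathSum φ m (shift^[k] y) (i + k) ≤ birkhoffSum shift g n y :=
    Finset.sum_le_sum fun _ _ => hφg _ _
  have hwindow := (abs_le.1 (abs_sum_pathSum_sub_le hB m n y i)).1
  have hmul : m * pathSum φ n y i ≤ n * (∫ x, g x ∂μ + m * η) + C + 2 * m ^ 2 * B := by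
    linarith [hC n y hy]
  refine (le_inv_mul_iff₀ hm').2 hmul |>.trans_eq ?_
  field_simp
  ring

end PathSums

section Mismatch

variable {K : Set Sig} {G : Set ℤ} {u : ℤ → Bool} {φ : Bool → ℤ → ℝ} {lo mid hi : ℝ}

open Classical in
/-- The indicator of reading a symbol `b` at a site `i` off the marking `(G, u)`; its path sums
count the deviations of a path from the marking. -/
def mismatch (G : Set ℤ) (u : ℤ → Bool) (b : Bool) (i : ℤ) : ℝ :=
  if i ∈ G ∧ b = u i then 0 else 1

/-- The logarithmic weights `φ` are at most `hi`, at least `mid` on the marking `(G, u)` and at most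
`lo` off it. By the last condition, a path off the marking half of the time averages less than
`mid`. -/
structure FavoursMarking (G : Set ℤ) (u : ℤ → Bool) (φ : Bool → ℤ → ℝ) (lo mid hi : ℝ) : Prop where
  mid_le : ∀ i ∈ G, mid ≤ φ (u i) i
  le_hi : ∀ b i, φ b i ≤ hi
  le_lo : ∀ b i, ¬(i ∈ G ∧ b = u i) → φ b i ≤ lo
  mid_le_hi : mid ≤ hi
  average_lt_mid : (lo + hi) / 2 < mid

lemma mismatch_nonneg (G : Set ℤ) (u : ℤ → Bool) (b : Bool) (i : ℤ) : 0 ≤ mismatch G u b i := by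
  unfold mismatch
  split_ifs <;> simp

lemma pathSum_mismatch_nonneg (n : ℕ) (x : Sig) (i : ℤ) : 0 ≤ pathSum (mismatch G u) n x i :=
  Finset.sum_nonneg fun _ _ => mismatch_nonneg _ _ _ _

lemma abs_mismatch_le (G : Set ℤ) (u : ℤ → Bool) (b : Bool) (i : ℤ) : |mismatch G u b i| ≤ 1 := by
  unfold mismatch
  split_ifs <;> simp

open Classical in
lemma card_unmarked_le_pathSum_mismatch (n : ℕ) (x : Sig) (i : ℤ) :
    (((Finset.range n).filter (fun k : ℕ => i + k ∉ G)).card : ℝ) ≤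
      pathSum (mismatch G u) n x i := by
  rw [← Finset.sum_boole]
  refine Finset.sum_le_sum fun k _ => ?_
  by_cases hk : i + k ∈ G
  · simpa [hk] using mismatch_nonneg G u (x k) (i + k)
  · simp [hk, mismatch]

lemma FavoursMarking.pathSum_le_of_le_two_mul (hφ : FavoursMarking G u φ lo mid hi) {n : ℕ}
    {x : Sig} {i : ℤ} (h : n ≤ 2 * pathSum (mismatch G u) n x i) :
    pathSum φ n x i ≤ n * mid - (mid - (lo + hi) / 2) * pathSum (mismatch G u) n x i := by
  have hterm (b : Bool) (j : ℤ) : φ b j ≤ hi - (hi - lo) * mismatch G u b j := by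
    unfold mismatch
    split_ifs with hj
    · simpa using hφ.le_hi b j
    · simpa using hφ.le_lo b j hj
  have hsum : pathSum φ n x i ≤ n * hi - (hi - lo) * pathSum (mismatch G u) n x i := by
    refine (Finset.sum_le_sum fun _ _ => hterm _ _).trans_eq ?_
    simp [pathSum, Finset.mul_sum]
  nlinarith [hφ.average_lt_mid, hφ.mid_le_hi]

lemma FavoursMarking.pathSum_le_of_Ico (hφ : FavoursMarking G u φ lo mid hi) {Λ C : ℝ}
    (hΛ : mid ≤ Λ) {n s t : ℕ} {x y : Sig} {i : ℤ} (ht : t ≤ n)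
    (hG : ∀ k < n, i + k ∈ G ↔ k ∈ Finset.Ico s t)
    (hu : ∀ k ∈ Finset.Ico s t, u (i + k) = y (k - s))
    (hy : pathSum φ (t - s) y (i + s) ≤ (t - s : ℕ) * Λ + C) :
    pathSum φ n x i ≤
      n * Λ + C - (mid - (lo + hi) / 2) * pathSum (mismatch G u) n x i := by
  classical
  have hterm : ∀ k ∈ Finset.range n, φ (x k) (i + k) ≤ Λ +
      (if k ∈ Finset.Ico s t then φ (u (i + k)) (i + k) - Λ else 0) -
        (mid - (lo + hi) / 2) * mismatch G u (x k) (i + k) := by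
    intro k hk
    have hGk := hG k (Finset.mem_range.1 hk)
    rw [if_congr hGk.symm rfl rfl]
    unfold mismatch
    split_ifs with hkG hmatch hmatch
    · simp [hmatch.2]
    · linarith [hφ.le_lo _ _ hmatch, hφ.mid_le _ hkG, hφ.mid_le_hi, hφ.average_lt_mid]
    · exact absurd hmatch.1 hkG
    · linarith [hφ.le_lo _ _ hmatch, hφ.mid_le_hi, hφ.average_lt_mid]
  have hword : ∑ k ∈ Finset.Ico s t, φ (u (i + k)) (i + k) = pathSum φ (t - s) y (i + s) := by
    rw [Finset.sum_Ico_eq_sum_range]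
    refine Finset.sum_congr rfl fun k hk => ?_
    rw [hu (s + k) (by simp at hk ⊢; omega)]
    push_cast
    rw [add_assoc, add_sub_cancel_left]
  have hinter : Finset.range n ∩ Finset.Ico s t = Finset.Ico s t :=
    Finset.inter_eq_right.2 fun k hk => Finset.mem_range.2 ((Finset.mem_Ico.1 hk).2.trans_le ht)
  have hsum := Finset.sum_le_sum hterm
  rw [Finset.sum_sub_distrib, Finset.sum_add_distrib, Finset.sum_ite_mem, hinter,
    Finset.sum_sub_distrib, hword, ← Finset.mul_sum] at hsum
  simp only [Finset.sum_const, Finset.card_range, Nat.card_Ico, nsmul_eq_mul] at hsum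
  unfold pathSum at hy hsum ⊢
  linarith

theorem FavoursMarking.pathSum_le (hφ : FavoursMarking G u φ lo mid hi)
    (hG : IsSparseMarking K G u) {Λ C : ℝ} (hΛ : mid ≤ Λ) (hC : 0 ≤ C)
    (hK : ∀ n, ∀ y ∈ K, ∀ i, pathSum φ n y i ≤ n * Λ + C) (n : ℕ) (x : Sig) (i : ℤ) :
    pathSum φ n x i ≤ n * Λ + C - (mid - (lo + hi) / 2) * pathSum (mismatch G u) n x i := by
  classical
  rcases hG.sparse i n with h | ⟨s, t, ht, hIco, y, hy, hu⟩
  · have hcard : (n : ℝ) ≤ 2 * pathSum (mismatch G u) n x i :=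
      (Nat.cast_le.2 h).trans <| by
        push_cast
        gcongr
        exact card_unmarked_le_pathSum_mismatch n x i
    have hmid : (n : ℝ) * mid ≤ n * Λ := by gcongr
    linarith [hφ.pathSum_le_of_le_two_mul hcard]
  · exact hφ.pathSum_le_of_Ico hΛ ht hIco hu (hK _ y hy _)

lemma IsSparseMarking.exists_eqOn (hG : IsSparseMarking K G u) {r : ℕ} (hr : 0 < r) {x : Sig}
    {i : ℤ} (hx : ∀ k < r, i + k ∈ G ∧ x k = u (i + k)) : ∃ y ∈ K, Set.EqOn y x (Set.Ico 0 r) := by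
  classical
  rcases hG.sparse i r with h | ⟨s, t, -, hIco, y, hy, hu⟩
  · rw [Finset.filter_false_of_mem fun k hk => not_not.2 (hx k (Finset.mem_range.1 hk)).1] at h
    simp at h
    omega
  · have hs : s = 0 := by simpa using (Finset.mem_Ico.1 ((hIco 0 hr).1 (hx 0 hr).1)).1
    refine ⟨y, hy, fun j hj => ?_⟩
    lift j to ℕ using hj.1
    have hjr : j < r := by exact_mod_cast hj.2
    rw [(hx j hjr).2, hu j ((hIco j hjr).1 (hx j hjr).1), hs, Nat.cast_zero, sub_zero]

lemma IsSparseMarking.indicator_offPattern_le (hG : IsSparseMarking K G u) {r : ℕ} (hr : 0 < r)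
    (x : Sig) (i : ℤ) :
    (offPattern K (Set.Ico 0 r)).indicator 1 x ≤ pathSum (mismatch G u) r x i := by
  refine Set.indicator_apply_le' (fun hx => ?_) fun _ => pathSum_mismatch_nonneg r x i
  obtain ⟨k, hk, hmis⟩ : ∃ k < r, ¬(i + k ∈ G ∧ x k = u (i + k)) := by
    by_contra! h
    obtain ⟨y, hy, hyx⟩ := hG.exists_eqOn hr h
    exact hx y hy hyx
  calc (1 : ℝ) = mismatch G u (x k) (i + k) := by rw [mismatch, if_neg hmis]
    _ ≤ pathSum (mismatch G u) r x i :=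
      Finset.single_le_sum (f := fun k : ℕ => mismatch G u (x k) (i + k))
        (fun _ _ => mismatch_nonneg _ _ _ _) (Finset.mem_range.2 hk)

lemma IsSparseMarking.birkhoffSum_offPattern_le (hG : IsSparseMarking K G u) {r : ℕ} (hr : 0 < r)
    (n : ℕ) (x : Sig) (i : ℤ) :
    birkhoffSum shift ((offPattern K (Set.Ico 0 r)).indicator 1) n x ≤
      r * pathSum (mismatch G u) n x i + 2 * r ^ 2 := by
  have hsum : birkhoffSum shift ((offPattern K (Set.Ico 0 r)).indicator 1) n x ≤
      ∑ k ∈ Finset.range n, pathSum (mismatch G u) r (shift^[k] x) (i + k) :=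
    Finset.sum_le_sum fun k _ => hG.indicator_offPattern_le hr _ _
  linarith [(abs_le.1 (abs_sum_pathSum_sub_le (abs_mismatch_le G u) r n x i)).2]

lemma FavoursMarking.mul_mid_le_of_mem (hφ : FavoursMarking G u φ lo mid hi)
    (hG : IsSparseMarking K G u) {y : Sig} (hy : y ∈ K) (n : ℕ) :
    ∃ i, n * mid ≤ pathSum φ n y i := by
  obtain ⟨i, hi⟩ := hG.recurrent y hy n
  refine ⟨i, ?_⟩
  calc (n : ℝ) * mid = ∑ _k ∈ Finset.range n, mid := by simp
    _ ≤ pathSum φ n y i := Finset.sum_le_sum fun k hk => by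
      obtain ⟨hmem, hword⟩ := hi k (Finset.mem_range.1 hk)
      exact hword ▸ hφ.mid_le _ hmem

end Mismatch

section LyapunovExponents

variable {φ : Bool → ℤ → ℝ} {B : ℝ}

/-- The largest weight `sup_i ∑_{k < n} φ (x k) (i + k)` of the word `x 0 ⋯ x (n - 1)`, with the
junk value `0` if these sums are unbounded above. -/
def supPathSum (φ : Bool → ℤ → ℝ) (n : ℕ) (x : Sig) : ℝ :=
  ⨆ i, pathSum φ n x i

/-- The Lyapunov exponent `Λ(φ, ν)` of the paper: the value of `LamOp` at the weighted shifts with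
logarithmic weights `φ`. -/
def lyapunovExponent (φ : Bool → ℤ → ℝ) (ν : Measure Sig) : ℝ :=
  infMean fun n => ∫ x, supPathSum φ n x ∂ν

/-- The value of `logSprOp` at the weighted shifts with logarithmic weights `φ`. -/
def logSpectralRadius (φ : Bool → ℤ → ℝ) : ℝ :=
  infMean fun n => ⨆ x, supPathSum φ n x

lemma pathSum_le_supPathSum (hB : ∀ b i, |φ b i| ≤ B) (n : ℕ) (x : Sig) (i : ℤ) :
    pathSum φ n x i ≤ supPathSum φ n x :=
  le_ciSup ⟨n * B, by rintro _ ⟨i, rfl⟩; exact (abs_le.1 (abs_pathSum_le hB n x i)).2⟩ i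

lemma abs_supPathSum_le (hB : ∀ b i, |φ b i| ≤ B) (n : ℕ) (x : Sig) :
    |supPathSum φ n x| ≤ n * B :=
  abs_le.2 ⟨(abs_le.1 (abs_pathSum_le hB n x 0)).1.trans (pathSum_le_supPathSum hB n x 0),
    ciSup_le fun i => (abs_le.1 (abs_pathSum_le hB n x i)).2⟩

lemma continuous_supPathSum (φ : Bool → ℤ → ℝ) (n : ℕ) : Continuous (supPathSum φ n) := by
  refine IsLocallyConstant.continuous <| (IsLocallyConstant.iff_exists_open _).2 fun x =>
    ⟨_, isOpen_setOf_eqOn (Set.finite_Ico (0 : ℤ) n) x, Set.eqOn_refl _ _, fun z hz =>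
      iSup_congr fun i => Finset.sum_congr rfl fun k hk => ?_⟩
  rw [hz ⟨k.cast_nonneg, Nat.cast_lt.2 (Finset.mem_range.1 hk)⟩]

lemma integrable_supPathSum (φ : Bool → ℤ → ℝ) (n : ℕ) (ν : Measure Sig) [IsFiniteMeasure ν] :
    Integrable (supPathSum φ n) ν :=
  (continuous_supPathSum φ n).integrable_of_hasCompactSupport (.of_compactSpace _)

variable {ν : Measure Sig} [IsProbabilityMeasure ν]

lemma neg_mul_le_integral_supPathSum (hB : ∀ b i, |φ b i| ≤ B) (n : ℕ) :
    -(n * B) ≤ ∫ x, supPathSum φ n x ∂ν := by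
  have h := norm_integral_le_of_norm_le_const (μ := ν) (f := supPathSum φ n)
    (ae_of_all _ (abs_supPathSum_le hB n))
  rw [probReal_univ, mul_one] at h
  exact (abs_le.1 h).1

lemma lyapunovExponent_le_logSpectralRadius (hB : ∀ b i, |φ b i| ≤ B) :
    lyapunovExponent φ ν ≤ logSpectralRadius φ := by
  refine infMean_mono (neg_mul_le_integral_supPathSum hB) fun n => ?_
  have hbdd : BddAbove (Set.range (supPathSum φ n)) :=
    ⟨n * B, by rintro _ ⟨x, rfl⟩; exact (abs_le.1 (abs_supPathSum_le hB n x)).2⟩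
  calc ∫ x, supPathSum φ n x ∂ν ≤ ∫ _x, ⨆ z, supPathSum φ n z ∂ν :=
        integral_mono (integrable_supPathSum φ n ν) (integrable_const _) (le_ciSup hbdd)
    _ = ⨆ z, supPathSum φ n z := by simp

lemma logSpectralRadius_le (hB : ∀ b i, |φ b i| ≤ B) {s C : ℝ}
    (h : ∀ (n : ℕ) (x : Sig), supPathSum φ n x ≤ n * s + C) : logSpectralRadius φ ≤ s := by
  refine infMean_le_of_forall_le_mul_add (B := B) (fun n => ?_) fun n => ciSup_le (h n)
  have x₀ : Sig := fun _ => false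
  exact (abs_le.1 (abs_supPathSum_le hB n x₀)).1.trans
    (le_ciSup ⟨n * s + C, by rintro _ ⟨x, rfl⟩; exact h n x⟩ x₀)

lemma lyapunovExponent_le_sub (hB : ∀ b i, |φ b i| ≤ B) (hν : ν.map shift = ν) {g : Sig → ℝ}
    (hg : Integrable g ν) {s C c : ℝ}
    (h : ∀ (n : ℕ) (x : Sig), supPathSum φ n x ≤ n * s + C - c * birkhoffSum shift g n x) :
    lyapunovExponent φ ν ≤ s - c * ∫ x, g x ∂ν := by
  have hpreserving : MeasurePreserving shift ν ν := ⟨continuous_shift.measurable, hν⟩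
  refine infMean_le_of_forall_le_mul_add (C := C) (neg_mul_le_integral_supPathSum hB) fun n => ?_
  have hsum := (integrable_birkhoffSum hpreserving hg n).const_mul c
  calc ∫ x, supPathSum φ n x ∂ν ≤ ∫ x, n * s + C - c * birkhoffSum shift g n x ∂ν :=
        integral_mono (integrable_supPathSum φ n ν) ((integrable_const _).sub hsum) (h n)
    _ = n * (s - c * ∫ x, g x ∂ν) + C := by
        rw [integral_sub (integrable_const _) hsum, integral_const, integral_const_mul,
          integral_birkhoffSum hpreserving hg, probReal_univ, one_smul]
        ring

end LyapunovExponents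

section UniqueMaximisingMeasure

variable {K : Set Sig} {G : Set ℤ} {u : ℤ → Bool} {φ : Bool → ℤ → ℝ} {lo mid hi B : ℝ}
  {μ ν : Measure Sig}

lemma FavoursMarking.mid_le_inv_mul_integral (hφ : FavoursMarking G u φ lo mid hi)
    (hG : IsSparseMarking K G u) (hB : ∀ b i, |φ b i| ≤ B) (hμ : IsUniquelyErgodicOn shift K μ)
    (hK : IsClosed K) {m : ℕ} (hm : 0 < m) :
    mid ≤ (m : ℝ)⁻¹ * ∫ x, supPathSum φ m x ∂μ := by
  have := hμ.isProbabilityMeasure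
  rw [le_inv_mul_iff₀ (Nat.cast_pos.2 hm)]
  calc (m : ℝ) * mid = ∫ _x, (m : ℝ) * mid ∂μ := by simp
    _ ≤ ∫ x, supPathSum φ m x ∂μ := by
      refine integral_mono_ae (integrable_const _) (integrable_supPathSum φ m μ) ?_
      filter_upwards [(mem_ae_iff_prob_eq_one hK.measurableSet).2 hμ.measure_eq_one] with y hy
      obtain ⟨i, hi⟩ := hφ.mul_mid_le_of_mem hG hy m
      exact hi.trans (pathSum_le_supPathSum hB m y i)

lemma FavoursMarking.exists_pathSum_le_sub_mismatch (hφ : FavoursMarking G u φ lo mid hi)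
    (hG : IsSparseMarking K G u) (hB : ∀ b i, |φ b i| ≤ B) (hμ : IsUniquelyErgodicOn shift K μ)
    (hK : IsClosed K) (hshift : Set.MapsTo shift K K) {m : ℕ} (hm : 0 < m) {η : ℝ} (hη : 0 < η) :
    ∃ C, ∀ n x i, pathSum φ n x i ≤ n * ((m : ℝ)⁻¹ * ∫ x, supPathSum φ m x ∂μ + η) + C -
      (mid - (lo + hi) / 2) * pathSum (mismatch G u) n x i := by
  obtain ⟨C, hC⟩ := exists_pathSum_le hμ hK hshift hB hm (continuous_supPathSum φ m)
    (pathSum_le_supPathSum hB m) hη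
  obtain ⟨y, hy⟩ := hμ.nonempty
  have hC0 : 0 ≤ C := by simpa [pathSum] using hC 0 y hy 0
  refine ⟨C, hφ.pathSum_le hG ?_ hC0 hC⟩
  linarith [hφ.mid_le_inv_mul_integral hG hB hμ hK hm]

theorem FavoursMarking.logSpectralRadius_le_lyapunovExponent
    (hφ : FavoursMarking G u φ lo mid hi) (hG : IsSparseMarking K G u) (hB : ∀ b i, |φ b i| ≤ B)
    (hμ : IsUniquelyErgodicOn shift K μ) (hK : IsClosed K) (hshift : Set.MapsTo shift K K) :
    logSpectralRadius φ ≤ lyapunovExponent φ μ := by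
  refine le_ciInf fun m => le_of_forall_pos_le_add fun η hη => ?_
  obtain ⟨C, hC⟩ := hφ.exists_pathSum_le_sub_mismatch hG hB hμ hK hshift m.succ_pos hη
  rw [← Nat.cast_succ]
  refine logSpectralRadius_le hB (C := C) fun n x => ciSup_le fun i => (hC n x i).trans ?_
  have hε := sub_pos.2 hφ.average_lt_mid
  exact sub_le_self _ (mul_nonneg hε.le (pathSum_mismatch_nonneg n x i))

lemma FavoursMarking.exists_supPathSum_le_sub_birkhoffSum (hφ : FavoursMarking G u φ lo mid hi)
    (hG : IsSparseMarking K G u) (hB : ∀ b i, |φ b i| ≤ B) (hμ : IsUniquelyErgodicOn shift K μ)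
    (hK : IsClosed K) (hshift : Set.MapsTo shift K K) {m r : ℕ} (hm : 0 < m) (hr : 0 < r) {η : ℝ}
    (hη : 0 < η) :
    ∃ C, ∀ n x, supPathSum φ n x ≤ n * ((m : ℝ)⁻¹ * ∫ x, supPathSum φ m x ∂μ + η) + C -
      (mid - (lo + hi) / 2) / r *
        birkhoffSum shift ((offPattern K (Set.Ico 0 r)).indicator 1) n x := by
  obtain ⟨C, hC⟩ := hφ.exists_pathSum_le_sub_mismatch hG hB hμ hK hshift hm hη
  refine ⟨C + 2 * r * (mid - (lo + hi) / 2), fun n x => ciSup_le fun i => ?_⟩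
  have hε : 0 < mid - (lo + hi) / 2 := sub_pos.2 hφ.average_lt_mid
  have : (r : ℝ) ≠ 0 := Nat.cast_ne_zero.2 hr.ne'
  have hoff : (mid - (lo + hi) / 2) / r *
      birkhoffSum shift ((offPattern K (Set.Ico 0 r)).indicator 1) n x ≤
        (mid - (lo + hi) / 2) / r * (r * pathSum (mismatch G u) n x i + 2 * r ^ 2) := by
    gcongr
    exact hG.birkhoffSum_offPattern_le hr n x i
  have hcancel : (mid - (lo + hi) / 2) / r * (r * pathSum (mismatch G u) n x i + 2 * r ^ 2) =
      (mid - (lo + hi) / 2) * pathSum (mismatch G u) n x i + 2 * r * (mid - (lo + hi) / 2) := by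
    field_simp
  linarith [hC n x i]

theorem FavoursMarking.lyapunovExponent_lt (hφ : FavoursMarking G u φ lo mid hi)
    (hG : IsSparseMarking K G u) (hB : ∀ b i, |φ b i| ≤ B) (hμ : IsUniquelyErgodicOn shift K μ)
    (hK : IsClosed K) (hshift : Set.MapsTo shift K K) [IsProbabilityMeasure ν]
    (hν : ν.map shift = ν) (hne : ν ≠ μ) : lyapunovExponent φ ν < lyapunovExponent φ μ := by
  obtain ⟨r, hr, hpos⟩ := exists_measureReal_offPattern_pos hK hshift hν
    fun h => hne (hμ.eq_of_invariant ν inferInstance hν h)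
  have hmeas : MeasurableSet (offPattern K (Set.Ico 0 (r : ℤ))) :=
    (isOpen_offPattern (Set.finite_Ico _ _)).measurableSet
  have hloss : 0 < (mid - (lo + hi) / 2) / r * ν.real (offPattern K (Set.Ico 0 (r : ℤ))) :=
    mul_pos (div_pos (sub_pos.2 hφ.average_lt_mid) (Nat.cast_pos.2 hr)) hpos
  suffices h : lyapunovExponent φ ν +
      (mid - (lo + hi) / 2) / r * ν.real (offPattern K (Set.Ico 0 (r : ℤ))) ≤
        lyapunovExponent φ μ from (lt_add_of_pos_right _ hloss).trans_le h
  refine le_ciInf fun m => le_of_forall_pos_le_add fun η hη => ?_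
  obtain ⟨C, hC⟩ := hφ.exists_supPathSum_le_sub_birkhoffSum hG hB hμ hK hshift m.succ_pos hr hη
  rw [← Nat.cast_succ, ← le_sub_iff_add_le, ← integral_indicator_one hmeas]
  exact lyapunovExponent_le_sub hB hν ((integrable_const 1).indicator hmeas) hC

theorem FavoursMarking.lyapunovExponent_eq_logSpectralRadius_iff
    (hφ : FavoursMarking G u φ lo mid hi) (hG : IsSparseMarking K G u) (hB : ∀ b i, |φ b i| ≤ B)
    (hμ : IsUniquelyErgodicOn shift K μ) (hK : IsClosed K) (hshift : Set.MapsTo shift K K)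
    [IsProbabilityMeasure ν] (hν : ν.map shift = ν) :
    lyapunovExponent φ ν = logSpectralRadius φ ↔ ν = μ := by
  have := hμ.isProbabilityMeasure
  have hmax : lyapunovExponent φ μ = logSpectralRadius φ :=
    (lyapunovExponent_le_logSpectralRadius hB).antisymm
      (hφ.logSpectralRadius_le_lyapunovExponent hG hB hμ hK hshift)
  rw [← hmax]
  refine ⟨fun h => ?_, fun h => h ▸ rfl⟩
  by_contra hne
  exact (hφ.lyapunovExponent_lt hG hB hμ hK hshift hν hne).ne h

end UniqueMaximisingMeasure

section MarkedWeights

lemma abs_log_le_max_abs_log {a c M : ℝ} (hc : 0 < c) (hca : c ≤ a) (haM : a ≤ M) :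
    |Real.log a| ≤ max |Real.log c| |Real.log M| :=
  abs_le_max_abs_abs (Real.log_le_log hc hca) (Real.log_le_log (hc.trans_le hca) haM)

variable {E : Type*} [NormedAddCommGroup E] [InnerProductSpace ℝ E] [CompleteSpace E]
  {e : HilbertBasis ℤ ℝ E} {p : (E →L[ℝ] E) × (E →L[ℝ] E)} {w : Bool → ℤ → ℝ} {G : Set ℤ}
  {u : ℤ → Bool}

lemma HasWeights.log_norm_opProd (h : HasWeights e p w) (hw : ∀ b i, 0 < w b i) (x : Sig)
    (n : ℕ) : Real.log ‖opProd p x n‖ = supPathSum (fun b i => Real.log (w b i)) n x :=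
  ((h.isLUB_log_norm_opProd hw x n).csSup_eq (Set.range_nonempty _)).symm

lemma HasWeights.lamOp_eq (h : HasWeights e p w) (hw : ∀ b i, 0 < w b i) (ν : Measure Sig) :
    LamOp p ν = lyapunovExponent (fun b i => Real.log (w b i)) ν := by
  simp only [LamOp, lyapunovExponent, infMean, h.log_norm_opProd hw]

lemma HasWeights.logSprOp_eq (h : HasWeights e p w) (hw : ∀ b i, 0 < w b i) :
    logSprOp p = logSpectralRadius fun b i => Real.log (w b i) := by
  simp only [logSprOp, logSpectralRadius, infMean, h.log_norm_opProd hw]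

open Classical in
/-- The weights `8` on the marking `(G, u)` and `1` off it. The values are chosen so that weights
closer than `1` to these still satisfy `FavoursMarking`, because `2 * 9 < 7 ^ 2`. -/
def markedWeight (G : Set ℤ) (u : ℤ → Bool) (b : Bool) (i : ℤ) : ℝ :=
  if i ∈ G ∧ b = u i then 8 else 1

lemma one_le_markedWeight (G : Set ℤ) (u : ℤ → Bool) (b : Bool) (i : ℤ) :
    1 ≤ markedWeight G u b i := by
  unfold markedWeight
  split_ifs <;> norm_num

lemma abs_markedWeight_le (G : Set ℤ) (u : ℤ → Bool) (b : Bool) (i : ℤ) :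
    |markedWeight G u b i| ≤ 8 := by
  unfold markedWeight
  split_ifs <;> norm_num

lemma lt_nine_of_abs_sub_markedWeight_lt (h : ∀ b i, |w b i - markedWeight G u b i| < 1) (b : Bool)
    (i : ℤ) : w b i < 9 := by
  linarith [(abs_lt.1 (h b i)).2, (abs_le.1 (abs_markedWeight_le G u b i)).2]

lemma favoursMarking_log (hpos : ∀ b i, 0 < w b i)
    (h : ∀ b i, |w b i - markedWeight G u b i| < 1) :
    FavoursMarking G u (fun b i => Real.log (w b i)) (Real.log 2) (Real.log 7) (Real.log 9) where
  mid_le i hi := by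
    have hw := h (u i) i
    rw [markedWeight, if_pos ⟨hi, rfl⟩] at hw
    exact Real.log_le_log (by norm_num) (by linarith [(abs_lt.1 hw).1])
  le_hi b i := Real.log_le_log (hpos b i) (lt_nine_of_abs_sub_markedWeight_lt h b i).le
  le_lo b i hbi := by
    have hw := h b i
    rw [markedWeight, if_neg hbi] at hw
    exact Real.log_le_log (hpos b i) (by linarith [(abs_lt.1 hw).2])
  mid_le_hi := Real.log_le_log (by norm_num) (by norm_num)
  average_lt_mid := by
    have h18 : Real.log 2 + Real.log 9 = Real.log 18 := by
      rw [← Real.log_mul] <;> norm_num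
    have h49 : 2 * Real.log 7 = Real.log 49 := by
      rw [← Real.log_rpow] <;> norm_num
    linarith [Real.log_lt_log (by norm_num : (0 : ℝ) < 18) (by norm_num : (18 : ℝ) < 49)]

end MarkedWeights

/-- Let `μ` be a shift-invariant Borel probability measure on `Σ₂` whose support is
uniquely ergodic (the restriction of the shift to `supp μ` admits exactly one invariant
Borel probability measure, necessarily `μ` itself).  Then there is a nonempty open subset
`U` of the space `W` of pairs of bounded invertible weighted shift operators with positive
coefficients such that every pair in `U` has `μ` as its unique maximising measure. -/
theorem exists_open_set_unique_maximising
    (e : HilbertBasis ℤ ℝ H)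
    (μ : Measure Sig) (hprob : IsProbabilityMeasure μ) (hinv : μ.map shift = μ)
    (hsupp : μ (suppM μ) = 1)
    (huniq : ∀ ν : Measure Sig, IsProbabilityMeasure ν → ν.map shift = ν →
      ν (suppM μ) = 1 → ν = μ) :
    ∃ U : Set (WSet e), IsOpen U ∧ U.Nonempty ∧
      ∀ p : WSet e, p ∈ U →
        ∀ ν : Measure Sig, IsProbabilityMeasure ν → ν.map shift = ν →
          (LamOp (p : (H →L[ℝ] H) × (H →L[ℝ] H)) ν
              = logSprOp (p : (H →L[ℝ] H) × (H →L[ℝ] H)) ↔ ν = μ) := by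
  have hμ : IsUniquelyErgodicOn shift (suppM μ) μ := ⟨hprob, hinv, hsupp, huniq⟩
  have hclosed : IsClosed (suppM μ) := isClosed_suppM μ
  have hshift : Set.MapsTo shift (suppM μ) (suppM μ) := mapsTo_shift_suppM hinv
  obtain ⟨Y, hY, hdense⟩ := exists_seq_mem_forall_eqOn hμ.nonempty
  have hG := isSparseMarking_markedSites hshift hY hdense
  obtain ⟨p₀, hp₀⟩ := exists_hasWeights e (abs_markedWeight_le markedSites (markedWord Y))
  have hmem : p₀ ∈ WSet e := mem_WSet_iff.2 ⟨_, ⟨1, one_pos, one_le_markedWeight _ _⟩, hp₀⟩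
  refine ⟨Metric.ball ⟨p₀, hmem⟩ 1, Metric.isOpen_ball, ⟨_, Metric.mem_ball_self one_pos⟩,
    fun p hp ν _ hν => ?_⟩
  obtain ⟨w, ⟨c, hc, hcw⟩, hw⟩ := mem_WSet_iff.1 p.2
  have hpos (b : Bool) (i : ℤ) : 0 < w b i := hc.trans_le (hcw b i)
  have hnear (b : Bool) (i : ℤ) : |w b i - markedWeight markedSites (markedWord Y) b i| < 1 :=
    (hw.abs_sub_le_dist hp₀ b i).trans_lt hp
  have hB (b : Bool) (i : ℤ) : |Real.log (w b i)| ≤ max |Real.log c| |Real.log 9| :=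
    abs_log_le_max_abs_log hc (hcw b i) (lt_nine_of_abs_sub_markedWeight_lt hnear b i).le
  rw [hw.lamOp_eq hpos, hw.logSprOp_eq hpos]
  exact (favoursMarking_log hpos hnear).lyapunovExponent_eq_logSpectralRadius_iff hG hB hμ hclosed
    hshift hν
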